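/- For each λ ∈ {1, 2, ℵ₀} and each cardinal κ with 𝔲 ≤ κ ≤ 𝔠, there is a downward-closed family F ⊆ ω^↑ω which has a countable upper bound and satisfies b(F) = λ and d(F) = κ. -/

import Mathlib

open Filter Set

/-- The set of monotone (nondecreasing) functions ℕ → ℕ, i.e. ω^↑ω. -/
def MonoFam : Set (ℕ → ℕ) := {f | Monotone f}

/-- `f ≤* g` : `f n ≤ g n` for all but finitely many `n`. -/
def LeStar (f g : ℕ → ℕ) : Prop := ∀ᶠ n in atTop, f n ≤ g n

/-- `f <* g` : `f n < g n` for all but finitely many `n`. -/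
def LtStar (f g : ℕ → ℕ) : Prop := ∀ᶠ n in atTop, f n < g n

/-- `f ≺ g` : `lim (g n - f n) = +∞`. -/
def Prec (f g : ℕ → ℕ) : Prop := ∀ N : ℕ, ∀ᶠ n in atTop, f n + N ≤ g n

/-- `F` is closed downward under `≤*` within the monotone functions. -/
def DownwardClosed (F : Set (ℕ → ℕ)) : Prop :=
  ∀ f, Monotone f → ∀ g ∈ F, LeStar f g → f ∈ F

/-- `H` is unbounded in `F`. -/
def UnboundedIn (H F : Set (ℕ → ℕ)) : Prop :=
  ∀ f ∈ F, ∃ h ∈ H, ¬ LtStar h f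

/-- `H` dominates `F`. -/
def DominatesIn (H F : Set (ℕ → ℕ)) : Prop :=
  ∀ f ∈ F, ∃ h ∈ H, LeStar f h

/-- The bounding number `b(F)`. -/
noncomputable def bNum (F : Set (ℕ → ℕ)) : Cardinal :=
  sInf {c : Cardinal | ∃ H : Set (ℕ → ℕ), H ⊆ F ∧ UnboundedIn H F ∧ Cardinal.mk H = c}

/-- The dominating number `d(F)`. -/
noncomputable def dNum (F : Set (ℕ → ℕ)) : Cardinal :=
  sInf {c : Cardinal | ∃ H : Set (ℕ → ℕ), H ⊆ F ∧ DominatesIn H F ∧ Cardinal.mk H = c}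

/-- Membership in the S-class. -/
def SClass (F : Set (ℕ → ℕ)) : Prop :=
  ∃ h g : ℕ → ℕ, Monotone h ∧ Monotone g ∧
    (∀ f ∈ F, ∃ᶠ n in atTop, f n ≤ h n) ∧
    (∀ f, Monotone f → (∃ᶠ n in atTop, f n ≤ g n) → f ∈ F)

/-- A nonprincipal ultrafilter. -/
def NonPrincipal (U : Ultrafilter ℕ) : Prop := ∀ a : ℕ, U ≠ pure a

/-- Membership in the U-class for an ultrafilter `U`. -/
def UClass (U : Ultrafilter ℕ) (F : Set (ℕ → ℕ)) : Prop :=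
  ∃ h g : ℕ → ℕ, Monotone h ∧ Monotone g ∧
    (∀ f ∈ F, {n | f n ≤ h n} ∈ U) ∧
    (∀ f, Monotone f → {n | f n ≤ g n} ∈ U → f ∈ F)

/-- `χ(U)`, the least cardinality of a base generating the ultrafilter `U`. -/
noncomputable def ultraChi (U : Ultrafilter ℕ) : Cardinal :=
  sInf {c : Cardinal | ∃ B : Set (Set ℕ),
    (∀ b ∈ B, b ∈ U) ∧ (∀ A ∈ U, ∃ b ∈ B, b ⊆ A) ∧ Cardinal.mk B = c}

/-- The ultrafilter number `𝔲`. -/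
noncomputable def uNum : Cardinal :=
  sInf {c : Cardinal | ∃ U : Ultrafilter ℕ, NonPrincipal U ∧ ultraChi U = c}

/-- `A ⊆* B` : `A \ B` is finite. -/
def SubsetStar (A B : Set ℕ) : Prop := (A \ B).Finite

/-- A P-point. -/
def PPoint (V : Ultrafilter ℕ) : Prop :=
  NonPrincipal V ∧ ∀ C : Set (Set ℕ), C.Countable → (∀ A ∈ C, A ∈ V) →
    ∃ B ∈ V, ∀ A ∈ C, SubsetStar B A

/-- A `P_κ`-point. -/
def PKappaPoint (κ : Cardinal) (V : Ultrafilter ℕ) : Prop :=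
  NonPrincipal V ∧ ∀ C : Set (Set ℕ), Cardinal.mk C < κ → (∀ A ∈ C, A ∈ V) →
    ∃ B ∈ V, ∀ A ∈ C, SubsetStar B A

/-- `next(n, X)` : the least element of `X` which is `≥ n`. -/
noncomputable def nextIn (n : ℕ) (X : Set ℕ) : ℕ := sInf {x | x ∈ X ∧ n ≤ x}

/-- `F↓` : the monotone functions `g` with `f ≺ g` for all `f ∈ F`. -/
def FDown (F : Set (ℕ → ℕ)) : Set (ℕ → ℕ) := {g | Monotone g ∧ ∀ f ∈ F, Prec f g}

/-- `F` has a countable upper bound. -/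
def CountableUpperBound (F : Set (ℕ → ℕ)) : Prop :=
  ∃ G : Set (ℕ → ℕ), G.Countable ∧ G ⊆ FDown F ∧
    ¬ ∃ p, Monotone p ∧ (∀ f ∈ F, Prec f p) ∧ (∀ g ∈ G, Prec p g)

/-!
Write `𝔟` for `bNum MonoFam`. Then `𝔟 ≤ 𝔲`, because the functions `next(·, b)`, for `b` in a base
of a nonprincipal ultrafilter, are unbounded: a bound would cut `ℕ` into intervals such that each
`b` meets almost all of them, yet the ultrafilter contains either the union of the even intervals
or its complement.

If `𝔟 ≤ κ ≤ 𝔠`, there are `κ` many monotone functions `f a` below `g n = n² + n` which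
* form a gap `(f, g)`: on even arguments `g - f a` is the inverse of the `a`-th member of an
  unbounded family;
* are independent: on odd arguments `f a` is large on the `a`-th member of an almost disjoint
  family, and small elsewhere.

Close `{f a}`, `{f a + N}` and `{max_{a ∈ D} f a + N}` downwards under `≤*`. Each of the three
families inherits the upper bound `g` from the gap. By independence no member lies above infinitely
many of the `f a`, so the dominating number is `κ`, and the bounding numbers are `1`, `2` and `ℵ₀`
respectively.
-/

/-! ### Eventual domination -/

section Orders

variable {f g h : ℕ → ℕ}

lemma LeStar.refl (f : ℕ → ℕ) : LeStar f f := EventuallyLE.refl _ f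

lemma LeStar.trans (hfg : LeStar f g) (hgh : LeStar g h) : LeStar f h :=
  EventuallyLE.trans hfg hgh

lemma LtStar.leStar (hfg : LtStar f g) : LeStar f g := hfg.mono fun _ => le_of_lt

lemma LtStar.trans (hfg : LtStar f g) (hgh : LtStar g h) : LtStar f h := by
  filter_upwards [hfg, hgh] with n using lt_trans

lemma LtStar.not_leStar (hfg : LtStar f g) : ¬ LeStar g f := fun hgf =>
  let ⟨_, hlt, hle⟩ := (Eventually.and hfg hgf).exists
  hlt.not_ge hle

lemma LeStar.trans_prec (hfg : LeStar f g) (hgh : Prec g h) : Prec f h := fun N => by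
  filter_upwards [hfg, hgh N] with n hle hlt
  omega

end Orders

/-! ### Bounding and dominating numbers -/

section Invariants

variable {F H : Set (ℕ → ℕ)}

lemma unboundedIn_self (F : Set (ℕ → ℕ)) : UnboundedIn F F := fun f hf =>
  ⟨f, hf, fun hlt => hlt.not_leStar (LeStar.refl f)⟩

lemma dominatesIn_self (F : Set (ℕ → ℕ)) : DominatesIn F F := fun f hf => ⟨f, hf, LeStar.refl f⟩

lemma exists_unboundedIn_mk_eq_bNum (F : Set (ℕ → ℕ)) :
    ∃ H ⊆ F, UnboundedIn H F ∧ Cardinal.mk H = bNum F :=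
  csInf_mem (s := {c | ∃ H : Set (ℕ → ℕ), H ⊆ F ∧ UnboundedIn H F ∧ Cardinal.mk H = c})
    ⟨_, F, subset_rfl, unboundedIn_self F, rfl⟩

lemma exists_dominatesIn_mk_eq_dNum (F : Set (ℕ → ℕ)) :
    ∃ H ⊆ F, DominatesIn H F ∧ Cardinal.mk H = dNum F :=
  csInf_mem (s := {c | ∃ H : Set (ℕ → ℕ), H ⊆ F ∧ DominatesIn H F ∧ Cardinal.mk H = c})
    ⟨_, F, subset_rfl, dominatesIn_self F, rfl⟩

lemma bNum_le_mk (hHF : H ⊆ F) (hH : UnboundedIn H F) : bNum F ≤ Cardinal.mk H :=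
  csInf_le' ⟨H, hHF, hH, rfl⟩

lemma dNum_le_mk (hHF : H ⊆ F) (hH : DominatesIn H F) : dNum F ≤ Cardinal.mk H :=
  csInf_le' ⟨H, hHF, hH, rfl⟩

lemma exists_unboundedIn_range {ι : Type} (hF : F.Nonempty) (hι : bNum F ≤ Cardinal.mk ι) :
    ∃ h : ι → ℕ → ℕ, (∀ a, h a ∈ F) ∧ UnboundedIn (range h) F := by
  obtain ⟨H, hHF, hH, hHmk⟩ := exists_unboundedIn_mk_eq_bNum F
  obtain ⟨e⟩ := hHmk.trans_le hι
  obtain ⟨f, hf⟩ := hF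
  obtain ⟨h, hh, -⟩ := hH f hf
  have : Nonempty H := ⟨h, hh⟩
  let φ : ι → H := Function.invFun e
  have hφ : range (fun a => (φ a : ℕ → ℕ)) = H :=
    ((Function.invFun_surjective e.injective).range_comp _).trans Subtype.range_coe
  exact ⟨fun a => φ a, fun a => hHF (φ a).2, hφ.symm ▸ hH⟩

lemma one_le_bNum (hF : F.Nonempty) : 1 ≤ bNum F := by
  obtain ⟨H, -, hH, hHmk⟩ := exists_unboundedIn_mk_eq_bNum F
  obtain ⟨f, hf⟩ := hF
  obtain ⟨h, hh, -⟩ := hH f hf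
  rw [← hHmk, Cardinal.one_le_iff_ne_zero, Cardinal.mk_ne_zero_iff]
  exact ⟨h, hh⟩

lemma two_le_bNum (hF : F.Nonempty) (hlt : ∀ f ∈ F, ∃ g ∈ F, LtStar f g) : 2 ≤ bNum F := by
  obtain ⟨H, hHF, hH, hHmk⟩ := exists_unboundedIn_mk_eq_bNum F
  obtain ⟨f, hf⟩ := hF
  obtain ⟨h, hh, -⟩ := hH f hf
  obtain ⟨g, hg, hhg⟩ := hlt h (hHF hh)
  obtain ⟨h', hh', hh'g⟩ := hH g hg
  rw [← hHmk, Cardinal.two_le_iff]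
  refine ⟨⟨h, hh⟩, ⟨h', hh'⟩, fun heq => hh'g ?_⟩
  rwa [← Subtype.mk.inj heq]

lemma exists_forall_ltStar_of_finite (hHfin : H.Finite) (hF : F.Nonempty)
    (hdir : ∀ f ∈ F, ∀ g ∈ F, ∃ k ∈ F, LtStar f k ∧ LtStar g k) (hHF : H ⊆ F) :
    ∃ k ∈ F, ∀ h ∈ H, LtStar h k := by
  induction H, hHfin using Set.Finite.induction_on with
  | empty => exact hF.imp fun k hk => ⟨hk, fun h hh => hh.elim⟩
  | @insert h H _ _ ih =>
    obtain ⟨hh, hHF⟩ := insert_subset_iff.1 hHF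
    obtain ⟨k, hk, hHk⟩ := ih hHF
    obtain ⟨k', hk', hhk', hkk'⟩ := hdir h hh k hk
    exact ⟨k', hk', forall_mem_insert.2 ⟨hhk', fun h' hh' => (hHk h' hh').trans hkk'⟩⟩

lemma aleph0_le_bNum (hF : F.Nonempty)
    (hdir : ∀ f ∈ F, ∀ g ∈ F, ∃ k ∈ F, LtStar f k ∧ LtStar g k) : Cardinal.aleph0 ≤ bNum F := by
  obtain ⟨H, hHF, hH, hHmk⟩ := exists_unboundedIn_mk_eq_bNum F
  by_contra! hlt
  have hHfin : H.Finite := Cardinal.lt_aleph0_iff_set_finite.1 (hHmk ▸ hlt)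
  obtain ⟨k, hk, hHk⟩ := exists_forall_ltStar_of_finite hHfin hF hdir hHF
  obtain ⟨h, hh, hhk⟩ := hH k hk
  exact hhk (hHk h hh)

lemma aleph0_le_bNum_monoFam : Cardinal.aleph0 ≤ bNum MonoFam := by
  refine aleph0_le_bNum ⟨0, monotone_const⟩ fun f hf g hg =>
    ⟨f + g + 1, (hf.add hg).add_const 1, ?_, ?_⟩ <;>
  · refine Eventually.of_forall fun n => ?_
    simp only [Pi.add_apply, Pi.one_apply]
    omega

end Invariants

/-! ### The inequality `𝔟 ≤ 𝔲` -/

section UltrafilterNumber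

variable {U : Ultrafilter ℕ} {b : Set ℕ}

lemma exists_mem_ultrafilter_frequently_disjoint_Ico {α : Type*} [Preorder α]
    (U : Ultrafilter α) {x : ℕ → α} (hx : Monotone x) :
    ∃ A ∈ U, ∃ᶠ i in atTop, Disjoint A (Ico (x i) (x (i + 1))) := by
  let E : Set α := ⋃ i, Ico (x (2 * i)) (x (2 * i + 1))
  rcases U.mem_or_compl_mem E with hE | hE
  · refine ⟨E, hE, frequently_atTop.2 fun N => ⟨2 * N + 1, by omega, ?_⟩⟩
    exact disjoint_iUnion_left.2 fun i => hx.pairwise_disjoint_on_Ico_succ (by omega)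
  · refine ⟨Eᶜ, hE, frequently_atTop.2 fun N => ⟨2 * N, by omega, ?_⟩⟩
    exact disjoint_compl_left_iff_subset.2
      (subset_iUnion (fun i => Ico (x (2 * i)) (x (2 * i + 1))) N)

lemma nextIn_mem (hb : b.Infinite) (n : ℕ) : nextIn n b ∈ b ∧ n ≤ nextIn n b :=
  let ⟨x, hx, hnx⟩ := hb.exists_gt n
  Nat.sInf_mem (s := {x | x ∈ b ∧ n ≤ x}) ⟨x, hx, hnx.le⟩

lemma monotone_nextIn (hb : b.Infinite) : Monotone fun n => nextIn n b := fun _ m hnm =>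
  Nat.sInf_le ⟨(nextIn_mem hb m).1, hnm.trans (nextIn_mem hb m).2⟩

lemma unboundedIn_nextIn {B : Set (Set ℕ)} (hB : ∀ A ∈ U, ∃ b ∈ B, b ⊆ A)
    (hinf : ∀ b ∈ B, b.Infinite) :
    UnboundedIn ((fun b n => nextIn n b) '' B) MonoFam := by
  intro p _
  by_contra! hlt
  let step : ℕ → ℕ := fun n => max (p n) (n + 1)
  let x : ℕ → ℕ := fun i => step^[i] 0
  have hstep : ∀ i, x (i + 1) = max (p (x i)) (x i + 1) := fun i =>
    Function.iterate_succ_apply' step i 0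
  have hx : StrictMono x := strictMono_nat_of_lt_succ fun i => by
    rw [hstep]
    exact lt_max_of_lt_right (Nat.lt_succ_self _)
  obtain ⟨A, hA, hdisj⟩ := exists_mem_ultrafilter_frequently_disjoint_Ico U hx.monotone
  obtain ⟨b, hb, hbA⟩ := hB A hA
  have hnext : ∀ᶠ i in atTop, nextIn (x i) b < p (x i) :=
    hx.tendsto_atTop.eventually (hlt _ (mem_image_of_mem _ hb))
  obtain ⟨i, hi, hlt_p⟩ := (hdisj.and_eventually hnext).exists
  obtain ⟨hmem, hle⟩ := nextIn_mem (hinf b hb) (x i)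
  refine disjoint_left.1 hi (hbA hmem) ⟨hle, hlt_p.trans_le ?_⟩
  rw [hstep]
  exact le_max_left _ _

lemma NonPrincipal.infinite_of_mem (hU : NonPrincipal U) (hb : b ∈ U) : b.Infinite := fun hfin =>
  let ⟨x, _, hx⟩ := Ultrafilter.eq_pure_of_finite_mem hfin hb
  hU x hx

lemma nonPrincipal_hyperfilter : NonPrincipal (hyperfilter ℕ) := fun a ha =>
  notMem_hyperfilter_of_finite (finite_singleton a) (ha ▸ Ultrafilter.mem_pure.2 rfl)

lemma bNum_monoFam_le_ultraChi (hU : NonPrincipal U) : bNum MonoFam ≤ ultraChi U := by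
  refine le_csInf ⟨_, {A | A ∈ U}, fun _ => id, fun A hA => ⟨A, hA, subset_rfl⟩, rfl⟩ ?_
  rintro _ ⟨B, hBU, hB, rfl⟩
  have hinf : ∀ b ∈ B, b.Infinite := fun b hb => hU.infinite_of_mem (hBU b hb)
  calc bNum MonoFam
      ≤ Cardinal.mk ((fun b n => nextIn n b) '' B) :=
        bNum_le_mk (image_subset_iff.2 fun b hb => monotone_nextIn (hinf b hb))
          (unboundedIn_nextIn hB hinf)
    _ ≤ Cardinal.mk B := Cardinal.mk_image_le

lemma bNum_monoFam_le_uNum : bNum MonoFam ≤ uNum := by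
  refine le_csInf ⟨_, _, nonPrincipal_hyperfilter, rfl⟩ ?_
  rintro _ ⟨U, hU, rfl⟩
  exact bNum_monoFam_le_ultraChi hU

end UltrafilterNumber

/-! ### Inverses of functions tending slowly to infinity -/

section GrowthInverse

variable {h : ℕ → ℕ}

/-- The inverse of a growth function `h`: the largest `k ≤ m` with `h k ≤ m`, or `0` if there is
none. The cutoff `k ≤ m` makes it finite also for bounded `h`. It turns fast growing functions into
slow ones. -/
def growthInverse (h : ℕ → ℕ) (m : ℕ) : ℕ := Nat.findGreatest (fun k => h k ≤ m) m

lemma tendsto_growthInverse (h : ℕ → ℕ) : Tendsto (growthInverse h) atTop atTop :=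
  tendsto_atTop.2 fun k => by
    filter_upwards [eventually_ge_atTop k, eventually_ge_atTop (h k)] with m hk hhk
    exact Nat.le_findGreatest hk hhk

lemma le_of_lt_growthInverse (hh : Monotone h) {k m : ℕ} (hk : k < growthInverse h m) :
    h k ≤ m :=
  (hh hk.le).trans (Nat.findGreatest_of_ne_zero (P := fun k => h k ≤ m) rfl (by omega))

lemma UnboundedIn.exists_not_leStar_growthInverse {H : Set (ℕ → ℕ)} (hHmono : H ⊆ MonoFam)
    (hH : UnboundedIn H MonoFam) {t : ℕ → ℕ} (ht : Tendsto t atTop atTop) :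
    ∃ h ∈ H, ¬ LeStar t (growthInverse h) := by
  have hlarge : ∀ k, ∃ m, k ≤ m ∧ k < t m := fun k =>
    ((eventually_ge_atTop k).and (ht.eventually_gt_atTop k)).exists
  choose p hp htp using hlarge
  have hmono : Monotone fun k => partialSups p k + 1 := (partialSups p).monotone.add_const 1
  obtain ⟨h, hhH, hh⟩ := hH _ hmono
  refine ⟨h, hhH, fun hle => hh ?_⟩
  filter_upwards [(tendsto_atTop_mono hp tendsto_id).eventually hle] with k hk
  exact Nat.lt_succ_of_le <| (le_of_lt_growthInverse (hHmono hhH) ((htp k).trans_le hk)).trans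
    (le_partialSups p k)

end GrowthInverse

/-! ### Almost disjoint families -/

section AlmostDisjoint

/-- An almost disjoint family: infinite sets with pairwise finite intersections. -/
structure AlmostDisjoint {ι : Type*} {α : Type*} (A : ι → Set α) : Prop where
  infinite : ∀ i, (A i).Infinite
  finite_inter : ∀ ⦃i j⦄, i ≠ j → (A i ∩ A j).Finite

/-- A code for the initial segment of length `n` of the binary sequence `x`. -/
def segmentCode (x : ℕ → Bool) (n : ℕ) : ℕ := Encodable.encode ((List.range n).map x)

lemma length_eq_of_segmentCode_eq {x y : ℕ → Bool} {n m : ℕ}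
    (h : segmentCode x n = segmentCode y m) : n = m := by
  simpa only [List.length_map, List.length_range] using
    congrArg List.length (Encodable.encode_injective h)

lemma eq_of_segmentCode_eq {x y : ℕ → Bool} {n k : ℕ} (h : segmentCode x n = segmentCode y n)
    (hk : k < n) : x k = y k :=
  List.map_inj_left.1 (Encodable.encode_injective h) k (List.mem_range.2 hk)

lemma almostDisjoint_range_segmentCode : AlmostDisjoint fun x => range (segmentCode x) where
  infinite _ := infinite_range_of_injective fun _ _ => length_eq_of_segmentCode_eq
  finite_inter x y hxy := by
    obtain ⟨k, hk⟩ := Function.ne_iff.1 hxy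
    refine ((finite_Iic k).image (segmentCode x)).subset ?_
    rintro _ ⟨⟨n, rfl⟩, m, hm⟩
    obtain rfl := length_eq_of_segmentCode_eq hm
    exact ⟨m, not_lt.1 fun hkm => hk (eq_of_segmentCode_eq hm.symm hkm), rfl⟩

lemma exists_almostDisjoint {ι : Type*} (hι : Cardinal.mk ι ≤ Cardinal.continuum) :
    ∃ A : ι → Set ℕ, AlmostDisjoint A := by
  obtain ⟨j⟩ : Nonempty (ι ↪ (ℕ → Bool)) := Cardinal.lift_mk_le'.1 (by simpa using hι)
  exact ⟨fun a => range (segmentCode (j a)),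
    fun a => almostDisjoint_range_segmentCode.infinite (j a),
    fun _ _ hab => almostDisjoint_range_segmentCode.finite_inter (j.injective.ne hab)⟩

end AlmostDisjoint

/-! ### Families generated by finite maxima and shifts -/

section StarClosure

variable {ι : Type*} {κ : Type*} {f : ι → ℕ → ℕ} {g : κ → ℕ → ℕ}

/-- The closure of `{g k | k : κ}` under passing to monotone functions below in the sense
of `≤*`. -/
def starClosure (g : κ → ℕ → ℕ) : Set (ℕ → ℕ) := {h | Monotone h ∧ ∃ k, LeStar h (g k)}

/-- The functions `f a + N`, indexed by the pairs `(a, N)`. -/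
def shift (f : ι → ℕ → ℕ) (p : ι × ℕ) (n : ℕ) : ℕ := f p.1 n + p.2

/-- The functions `max_{a ∈ D} f a + N`, indexed by the pairs `(D, N)`; the maximum over `D = ∅`
is `0`. -/
def supShift (f : ι → ℕ → ℕ) (p : Finset ι × ℕ) (n : ℕ) : ℕ := p.1.sup (fun a => f a n) + p.2

lemma starClosure_subset_monoFam : starClosure g ⊆ MonoFam := fun _ hh => hh.1

lemma downwardClosed_starClosure : DownwardClosed (starClosure g) :=
  fun _ hh _ ⟨_, k, hk⟩ hle => ⟨hh, k, hle.trans hk⟩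

lemma mem_starClosure (hg : ∀ k, Monotone (g k)) (k : κ) : g k ∈ starClosure g :=
  ⟨hg k, k, LeStar.refl _⟩

lemma starClosure_subset_starClosure (hfg : ∀ a, ∃ k, LeStar (f a) (g k)) :
    starClosure f ⊆ starClosure g := fun _ ⟨hh, a, ha⟩ =>
  let ⟨k, hk⟩ := hfg a
  ⟨hh, k, ha.trans hk⟩

lemma dNum_starClosure_le {κ : Type} {g : κ → ℕ → ℕ}
    (hg : ∀ k, Monotone (g k)) : dNum (starClosure g) ≤ Cardinal.mk κ :=
  (dNum_le_mk (range_subset_iff.2 (mem_starClosure hg))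
    fun _ ⟨_, k, hk⟩ => ⟨g k, mem_range_self k, hk⟩).trans Cardinal.mk_range_le

lemma monotone_shift (hf : ∀ a, Monotone (f a)) (p : ι × ℕ) : Monotone (shift f p) :=
  (hf p.1).add_const p.2

lemma monotone_supShift (hf : ∀ a, Monotone (f a)) (p : Finset ι × ℕ) :
    Monotone (supShift f p) := fun _ _ hnm =>
  Nat.add_le_add_right (Finset.sup_mono_fun fun a _ => hf a hnm) p.2

lemma starClosure_subset_shift (f : ι → ℕ → ℕ) : starClosure f ⊆ starClosure (shift f) :=
  starClosure_subset_starClosure fun a => ⟨(a, 0), LeStar.refl _⟩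

lemma supShift_singleton (f : ι → ℕ → ℕ) (a : ι) (N : ℕ) :
    supShift f ({a}, N) = shift f (a, N) := by
  ext n
  simp only [supShift, shift, Finset.sup_singleton]

lemma starClosure_shift_subset_supShift (f : ι → ℕ → ℕ) :
    starClosure (shift f) ⊆ starClosure (supShift f) :=
  starClosure_subset_starClosure fun p =>
    ⟨({p.1}, p.2), by rw [supShift_singleton]; exact LeStar.refl _⟩

lemma prec_supShift {g : ℕ → ℕ} (hg : Tendsto g atTop atTop) (hfg : ∀ a, Prec (f a) g)
    (p : Finset ι × ℕ) : Prec (supShift f p) g := by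
  obtain ⟨D, M⟩ := p
  intro N
  have hD : ∀ᶠ n in atTop, ∀ a ∈ D, f a n + (M + N) ≤ g n :=
    (eventually_all_finset D).2 fun a _ => hfg a (M + N)
  filter_upwards [hD, hg.eventually_ge_atTop (M + N)] with n hDn hn
  have hsup : D.sup (fun a => f a n) ≤ g n - (M + N) :=
    Finset.sup_le fun a ha => Nat.le_sub_of_add_le (hDn a ha)
  simp only [supShift]
  omega

end StarClosure

/-! ### Invariants of the families generated by independent functions -/

section Independent

variable {ι : Type*} {f : ι → ℕ → ℕ}

/-- Independence of a family of functions: no member lies below the maximum of finitely many other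
members plus a constant, in the sense of `≤*`. -/
def StarIndependent (f : ι → ℕ → ℕ) : Prop :=
  ∀ a D N, LeStar (f a) (supShift f (D, N)) → a ∈ D

namespace StarIndependent

lemma eq_of_leStar_shift (hf : StarIndependent f) {a : ι} {p : ι × ℕ}
    (hle : LeStar (f a) (shift f p)) : a = p.1 :=
  Finset.mem_singleton.1 (hf a {p.1} p.2 (by rwa [supShift_singleton]))

lemma eq_of_leStar (hf : StarIndependent f) {a b : ι} (hle : LeStar (f a) (f b)) : a = b :=
  hf.eq_of_leStar_shift (p := (b, 0)) hle

lemma finite_setOf_leStar (hf : StarIndependent f) {h : ℕ → ℕ}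
    (hh : h ∈ starClosure (supShift f)) : {a | LeStar (f a) h}.Finite := by
  obtain ⟨-, ⟨D, N⟩, hD⟩ := hh
  exact D.finite_toSet.subset fun a ha => hf a D N (ha.trans hD)

lemma mk_le_mk_of_dominatesIn {ι : Type} [Infinite ι] {f : ι → ℕ → ℕ} (hf : StarIndependent f)
    {F H : Set (ℕ → ℕ)} (hfF : ∀ a, f a ∈ F) (hH : H ⊆ starClosure (supShift f))
    (hdom : DominatesIn H F) : Cardinal.mk ι ≤ Cardinal.mk H := by
  by_contra! hlt
  choose φ hφH hφ using fun a => hdom (f a) (hfF a)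
  obtain ⟨⟨h, hh⟩, hfiber⟩ := Cardinal.exists_infinite_fiber (fun a => (⟨φ a, hφH a⟩ : H)) hlt
  refine Set.infinite_coe_iff.1 hfiber ((hf.finite_setOf_leStar (hH hh)).subset ?_)
  intro a ha
  obtain rfl : φ a = h := congrArg Subtype.val ha
  exact hφ a

lemma dNum_starClosure {ι κ : Type} [Infinite ι] {f : ι → ℕ → ℕ} {g : κ → ℕ → ℕ}
    (hf : StarIndependent f) (hg : ∀ k, Monotone (g k)) (hfg : ∀ a, f a ∈ starClosure g)
    (hgf : starClosure g ⊆ starClosure (supShift f)) (hκ : Cardinal.mk κ ≤ Cardinal.mk ι) :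
    dNum (starClosure g) = Cardinal.mk ι := by
  obtain ⟨H, hHF, hH, hHmk⟩ := exists_dominatesIn_mk_eq_dNum (starClosure g)
  exact ((dNum_starClosure_le hg).trans hκ).antisymm
    (hHmk ▸ hf.mk_le_mk_of_dominatesIn hfg (hHF.trans hgf) hH)

lemma bNum_starClosure [Nonempty ι] (hf : StarIndependent f) (hmono : ∀ a, Monotone (f a)) :
    bNum (starClosure f) = 1 := by
  obtain ⟨a⟩ := ‹Nonempty ι›
  have ha : f a ∈ starClosure f := mem_starClosure hmono a
  refine le_antisymm ?_ (one_le_bNum ⟨f a, ha⟩)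
  refine (bNum_le_mk (singleton_subset_iff.2 ha) ?_).trans_eq (Cardinal.mk_singleton _)
  rintro h ⟨-, b, hb⟩
  refine ⟨f a, rfl, fun hlt => ?_⟩
  obtain rfl := hf.eq_of_leStar (hlt.leStar.trans hb)
  exact hlt.not_leStar hb

lemma bNum_starClosure_shift [Nontrivial ι] (hf : StarIndependent f)
    (hmono : ∀ a, Monotone (f a)) : bNum (starClosure (shift f)) = 2 := by
  obtain ⟨a, b, hab⟩ := exists_pair_ne ι
  have hmem : ∀ p, shift f p ∈ starClosure (shift f) := mem_starClosure (monotone_shift hmono)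
  apply le_antisymm
  · have hunb : UnboundedIn {f a, f b} (starClosure (shift f)) := by
      rintro h ⟨-, p, hp⟩
      by_contra! hlt
      have ha : a = p.1 := hf.eq_of_leStar_shift ((hlt (f a) (by simp)).leStar.trans hp)
      have hb : b = p.1 := hf.eq_of_leStar_shift ((hlt (f b) (by simp)).leStar.trans hp)
      exact hab (ha.trans hb.symm)
    calc bNum (starClosure (shift f))
        ≤ Cardinal.mk ({f a, f b} : Set (ℕ → ℕ)) :=
          bNum_le_mk (pair_subset (hmem (a, 0)) (hmem (b, 0))) hunb
      _ ≤ 2 := by simpa [one_add_one_eq_two] using Cardinal.mk_insert_le (s := {f b}) (a := f a)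
  · exact two_le_bNum ⟨_, hmem (a, 0)⟩ fun h ⟨_, p, hp⟩ =>
      ⟨_, hmem (p.1, p.2 + 1), hp.mono fun n hn => Nat.lt_succ_of_le hn⟩

lemma bNum_starClosure_supShift [Infinite ι] (hf : StarIndependent f)
    (hmono : ∀ a, Monotone (f a)) : bNum (starClosure (supShift f)) = Cardinal.aleph0 := by
  classical
  have hmem : ∀ p, supShift f p ∈ starClosure (supShift f) :=
    mem_starClosure (monotone_supShift hmono)
  apply le_antisymm
  · let e : ℕ ↪ ι := Infinite.natEmbedding ι
    have hsub : range (f ∘ e) ⊆ starClosure (supShift f) := range_subset_iff.2 fun i =>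
      ⟨hmono _, ({e i}, 0), by rw [supShift_singleton]; exact LeStar.refl _⟩
    have hunb : UnboundedIn (range (f ∘ e)) (starClosure (supShift f)) := by
      intro h hh
      obtain ⟨_, ⟨i, rfl⟩, hi⟩ :=
        (infinite_range_of_injective e.injective).exists_notMem_finite (hf.finite_setOf_leStar hh)
      exact ⟨f (e i), mem_range_self i, fun hlt => hi hlt.leStar⟩
    calc bNum (starClosure (supShift f))
        ≤ Cardinal.mk (range (f ∘ e)) := bNum_le_mk hsub hunb
      _ ≤ Cardinal.aleph0 := Cardinal.mk_range_le.trans_eq Cardinal.mk_nat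
  · refine aleph0_le_bNum ⟨_, hmem (∅, 0)⟩ fun h ⟨_, ⟨D, N⟩, hD⟩ h' ⟨_, ⟨D', N'⟩, hD'⟩ =>
      ⟨_, hmem (D ∪ D', max N N' + 1), hD.mono fun n hn => ?_, hD'.mono fun n hn => ?_⟩ <;>
    · simp only [supShift, Finset.sup_union] at hn ⊢
      omega

end StarIndependent

end Independent

/-! ### Gaps and countable upper bounds -/

section Gap

variable {ι : Type*} {f : ι → ℕ → ℕ} {g : ℕ → ℕ}

/-- The family `f` and the single function `g` form a gap for `≺`: `g` lies above all `f a`, and no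
function fits in between. -/
structure IsGap (f : ι → ℕ → ℕ) (g : ℕ → ℕ) : Prop where
  prec : ∀ a, Prec (f a) g
  not_between : ∀ p, (∀ a, Prec (f a) p) → ¬ Prec p g

lemma IsGap.countableUpperBound (hfg : IsGap f g) (hmono : Monotone g)
    (hlim : Tendsto g atTop atTop) {F : Set (ℕ → ℕ)} (hfF : ∀ a, f a ∈ F)
    (hF : F ⊆ starClosure (supShift f)) : CountableUpperBound F := by
  refine ⟨{g}, countable_singleton g, singleton_subset_iff.2 ⟨hmono, fun h hh => ?_⟩, ?_⟩
  · obtain ⟨-, p, hp⟩ := hF hh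
    exact hp.trans_prec (prec_supShift hlim hfg.prec p)
  · rintro ⟨p, -, hFp, hpg⟩
    exact hfg.not_between p (fun a => hFp _ (hfF a)) (hpg g rfl)

end Gap

/-! ### An independent gap -/

section GapFun

/-- The common upper bound `n² + n` of the gap. -/
def pronic (n : ℕ) : ℕ := n * n + n

/-- The members of the gap below `pronic`. The distance to `pronic` at `2 * m` is `s m` (as long as
`s m ≤ 2 * m`), while the value at `2 * m + 1` records whether `m ∈ A`. The summand `n * n` makes
the function monotone whatever is coded. -/
noncomputable def gapFun (s : ℕ → ℕ) (A : Set ℕ) (n : ℕ) : ℕ :=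
  n * n + if Even n then n - s (n / 2) else A.indicator id (n / 2)

variable {s : ℕ → ℕ} {A : Set ℕ} {m : ℕ}

lemma gapFun_two_mul : gapFun s A (2 * m) = 2 * m * (2 * m) + (2 * m - s m) := by
  simp [gapFun]

lemma gapFun_two_mul_add_one_of_mem (hm : m ∈ A) :
    gapFun s A (2 * m + 1) = (2 * m + 1) * (2 * m + 1) + m := by
  have hdiv : (2 * m + 1) / 2 = m := by omega
  simp [gapFun, hdiv, hm]

lemma gapFun_two_mul_add_one_of_notMem (hm : m ∉ A) :
    gapFun s A (2 * m + 1) = (2 * m + 1) * (2 * m + 1) := by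
  have hdiv : (2 * m + 1) / 2 = m := by omega
  simp [gapFun, hdiv, hm]

lemma monotone_mul_self_add {w : ℕ → ℕ} (hw : ∀ n, w n ≤ n) : Monotone fun n => n * n + w n :=
  monotone_nat_of_le_succ fun n => by
    have := hw n
    nlinarith

lemma monotone_pronic : Monotone pronic := monotone_mul_self_add fun _ => le_rfl

lemma tendsto_pronic : Tendsto pronic atTop atTop :=
  tendsto_atTop_mono (fun n => Nat.le_add_left n (n * n)) tendsto_id

lemma monotone_gapFun (s : ℕ → ℕ) (A : Set ℕ) : Monotone (gapFun s A) :=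
  monotone_mul_self_add fun n => by
    split_ifs
    · exact Nat.sub_le _ _
    · exact (indicator_le_self A id _).trans (Nat.div_le_self n 2)

lemma prec_gapFun_pronic (hs : Tendsto s atTop atTop) (A : Set ℕ) :
    Prec (gapFun s A) pronic := by
  intro N
  have hhalf : Tendsto (fun n : ℕ => n / 2) atTop atTop := Nat.tendsto_div_const_atTop two_ne_zero
  filter_upwards [hhalf.eventually (hs.eventually_ge_atTop N), eventually_ge_atTop (2 * N)]
    with n hsn hn
  have hind : A.indicator id (n / 2) ≤ n / 2 := indicator_le_self A id _
  unfold gapFun pronic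
  split_ifs <;> omega

variable {ι : Type*} {A : ι → Set ℕ}

lemma starIndependent_gapFun (hA : AlmostDisjoint A) (s : ι → ℕ → ℕ) :
    StarIndependent fun a => gapFun (s a) (A a) := by
  intro a D N hle
  by_contra haD
  have hdisj : ∀ᶠ m in atTop, ∀ b ∈ D, m ∉ A a ∩ A b := by
    refine (eventually_all_finset D).2 fun b hb => ?_
    rw [← Nat.cofinite_eq_atTop]
    exact (hA.finite_inter (ne_of_mem_of_not_mem hb haD).symm).eventually_cofinite_notMem
  have hodd : Tendsto (fun m : ℕ => 2 * m + 1) atTop atTop :=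
    tendsto_atTop_mono (fun m => show m ≤ 2 * m + 1 by omega) tendsto_id
  obtain ⟨m, hma, hmD, hlem, hNm⟩ :=
    ((Nat.frequently_atTop_iff_infinite.2 (hA.infinite a)).and_eventually
      (hdisj.and ((hodd.eventually hle).and (eventually_gt_atTop N)))).exists
  have hsup : D.sup (fun b => gapFun (s b) (A b) (2 * m + 1)) ≤ (2 * m + 1) * (2 * m + 1) :=
    Finset.sup_le fun b hb =>
      (gapFun_two_mul_add_one_of_notMem fun hmb => hmD b hb ⟨hma, hmb⟩).le
  simp only [supShift, gapFun_two_mul_add_one_of_mem hma] at hlem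
  omega

lemma isGap_gapFun_growthInverse {h : ι → ℕ → ℕ} (hmono : ∀ a, Monotone (h a))
    (hunb : UnboundedIn (range h) MonoFam) (A : ι → Set ℕ) :
    IsGap (fun a => gapFun (growthInverse (h a)) (A a)) pronic where
  prec a := prec_gapFun_pronic (tendsto_growthInverse (h a)) (A a)
  not_between p hfp hpg := by
    have heven : Tendsto (fun m : ℕ => 2 * m) atTop atTop :=
      tendsto_id.const_mul_atTop' two_pos
    have hgap : Tendsto (fun m => pronic (2 * m) - p (2 * m)) atTop atTop :=
      tendsto_atTop.2 fun N => (heven.eventually (hpg N)).mono fun m hm =>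
        Nat.le_sub_of_add_le' hm
    obtain ⟨_, ⟨a, rfl⟩, ha⟩ :=
      hunb.exists_not_leStar_growthInverse (range_subset_iff.2 hmono) hgap
    refine ha ((heven.eventually (hfp a 0)).mono fun m hm => ?_)
    simp only [gapFun_two_mul, pronic] at hm ⊢
    omega

lemma exists_starIndependent_isGap {ι : Type} (hb : bNum MonoFam ≤ Cardinal.mk ι)
    (hc : Cardinal.mk ι ≤ Cardinal.continuum) :
    ∃ f : ι → ℕ → ℕ, (∀ a, Monotone (f a)) ∧ StarIndependent f ∧ IsGap f pronic := by
  obtain ⟨h, hmono, hunb⟩ := exists_unboundedIn_range ⟨0, monotone_const⟩ hb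
  obtain ⟨A, hA⟩ := exists_almostDisjoint hc
  exact ⟨fun a => gapFun (growthInverse (h a)) (A a), fun a => monotone_gapFun _ _,
    starIndependent_gapFun hA _, isGap_gapFun_growthInverse hmono hunb A⟩

end GapFun

theorem bounded_family_uNum_spectrum_general
    (lam : Cardinal) (hlam : lam ∈ ({1, 2, Cardinal.aleph0} : Set Cardinal))
    (kappa : Cardinal) (h1 : bNum MonoFam ≤ kappa) (h2 : kappa ≤ Cardinal.continuum) :
    ∃ F : Set (ℕ → ℕ), F ⊆ MonoFam ∧ DownwardClosed F ∧ CountableUpperBound F ∧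
      bNum F = lam ∧ dNum F = kappa := by
  induction kappa using Cardinal.inductionOn with | _ ι
  have : Infinite ι := Cardinal.infinite_iff.2 (aleph0_le_bNum_monoFam.trans h1)
  obtain ⟨f, hmono, hind, hgap⟩ := exists_starIndependent_isGap h1 h2
  have hmem : ∀ a, f a ∈ starClosure f := mem_starClosure hmono
  have hshift : starClosure f ⊆ starClosure (shift f) := starClosure_subset_shift f
  have hsup : starClosure (shift f) ⊆ starClosure (supShift f) :=
    starClosure_shift_subset_supShift f
  have hcub {F : Set (ℕ → ℕ)} : (∀ a, f a ∈ F) → F ⊆ starClosure (supShift f) →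
      CountableUpperBound F := hgap.countableUpperBound monotone_pronic tendsto_pronic
  rcases hlam with rfl | rfl | rfl
  · exact ⟨starClosure f, starClosure_subset_monoFam, downwardClosed_starClosure,
      hcub hmem (hshift.trans hsup), hind.bNum_starClosure hmono,
      hind.dNum_starClosure hmono hmem (hshift.trans hsup) le_rfl⟩
  · have hmem_shift : ∀ a, f a ∈ starClosure (shift f) := fun a => hshift (hmem a)
    exact ⟨starClosure (shift f), starClosure_subset_monoFam, downwardClosed_starClosure,
      hcub hmem_shift hsup, hind.bNum_starClosure_shift hmono,
      hind.dNum_starClosure (monotone_shift hmono) hmem_shift hsup (by simp)⟩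
  · have hmem_sup : ∀ a, f a ∈ starClosure (supShift f) := fun a => hsup (hshift (hmem a))
    exact ⟨starClosure (supShift f), starClosure_subset_monoFam, downwardClosed_starClosure,
      hcub hmem_sup subset_rfl, hind.bNum_starClosure_supShift hmono,
      hind.dNum_starClosure (monotone_supShift hmono) hmem_sup subset_rfl (by simp)⟩

/-- For `λ ∈ {1, 2, ℵ₀}` and `𝔲 ≤ κ ≤ 𝔠`, there is a
downward-closed family with countable upper bound, bounding number `λ` and
dominating number `κ`. -/
theorem bounded_family_uNum_spectrum
    (lam : Cardinal) (hlam : lam ∈ ({1, 2, Cardinal.aleph0} : Set Cardinal))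
    (kappa : Cardinal) (h1 : uNum ≤ kappa) (h2 : kappa ≤ Cardinal.continuum) :
    ∃ F : Set (ℕ → ℕ), F ⊆ MonoFam ∧ DownwardClosed F ∧ CountableUpperBound F ∧
      bNum F = lam ∧ dNum F = kappa :=
  bounded_family_uNum_spectrum_general lam hlam kappa (bNum_monoFam_le_uNum.trans h1) h2
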